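/- Let S be a Seidel matrix of odd order n with exactly three distinct eigenvalues, at least one of which is irrational. Then the spectrum of S is {[−√n]^{(n−1)/2}, [0]^1, [√n]^{(n−1)/2}}. -/

import Mathlib

def IsSeidel {n : ℕ} (S : Matrix (Fin n) (Fin n) ℝ) : Prop :=
  S.IsSymm ∧ (∀ i, S i i = 0) ∧ ∀ i j, i ≠ j → S i j = 1 ∨ S i j = -1

open Polynomial

lemma sd_charpoly_zmod {n : ℕ} (hn : Odd n) (T : Matrix (Fin n) (Fin n) ℤ)
    (h0 : ∀ i, T i i = 0) (h1 : ∀ i j, i ≠ j → T i j = 1 ∨ T i j = -1) :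
    T.charpoly.map (Int.castRingHom (ZMod 2)) = X * (X + 1) ^ (n - 1) := by
  rw [← Matrix.charpoly_map]
  have : T.map (Int.castRingHom (ZMod 2)) =
      Matrix.vecMulVec (fun _ => 1) (fun _ => 1) - Matrix.scalar (Fin n) (1 : ZMod 2) := by
    ext i j
    by_cases hij : i = j
    · subst hij; simp [h0, Matrix.vecMulVec_apply]
    · rcases h1 i j hij with h | h <;> simp [h, Matrix.vecMulVec_apply, hij]
  rw [this, Matrix.charpoly_sub_scalar, Matrix.charpoly_vecMulVec]
  obtain ⟨k, rfl⟩ := hn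
  have h2 : (2 : ZMod 2) = 0 := by decide
  have h2' : (2 : (ZMod 2)[X]) = 0 := by
    rw [← map_ofNat (C : ZMod 2 →+* (ZMod 2)[X]), h2, C_0]
  simp [dotProduct, h2]
  rw [pow_succ]
  ring

lemma sd_factor (P : ℤ[X]) (hP : P.Monic) (hs : (P.map (Int.castRingHom ℝ)).Splits)
    (x : ℝ) (hx : x ∈ (P.map (Int.castRingHom ℝ)).roots) (hirr : Irrational x) :
    ∃ (f g : ℤ[X]) (m : ℕ), f.Monic ∧ g.Monic ∧ 1 ≤ m ∧ P = f ^ m * g ∧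
      (f.map (Int.castRingHom ℝ)).Splits ∧ (g.map (Int.castRingHom ℝ)).Splits ∧
      (f.map (Int.castRingHom ℝ)).roots.Nodup ∧ x ∈ (f.map (Int.castRingHom ℝ)).roots ∧
      2 ≤ f.natDegree ∧
      (∀ y ∈ (f.map (Int.castRingHom ℝ)).roots, y ∉ (g.map (Int.castRingHom ℝ)).roots) ∧
      (∀ y ∈ (f.map (Int.castRingHom ℝ)).roots, Irrational y) := by
  have key : ∀ (Q : ℤ[X]), Q.Monic → ∀ y, y ∈ (Q.map (Int.castRingHom ℝ)).roots ↔ aeval y Q = 0 := by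
    intro Q hQ y
    rw [mem_roots (hQ.map _).ne_zero, IsRoot.def, eval_map, aeval_def]; rfl
  have hP0 := (key P hP x).1 hx
  have hxint : IsIntegral ℤ x := ⟨P, hP, hP0⟩
  set f := minpoly ℤ x with hf
  have hfm : f.Monic := minpoly.monic hxint
  have hfp : Prime f := minpoly.prime_of_isIntegrallyClosed hxint
  have hfP : f ∣ P := minpoly.isIntegrallyClosed_dvd hxint hP0
  have hfin : FiniteMultiplicity f P := FiniteMultiplicity.of_prime_left hfp hP.ne_zero
  obtain ⟨g, hg, hng⟩ := hfin.exists_eq_pow_mul_and_not_dvd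
  set m := multiplicity f P with hm
  have hgm : g.Monic := (hfm.pow m).of_mul_monic_left (hg ▸ hP)
  have hmin : ∀ y : ℝ, aeval y f = 0 → minpoly ℤ y = f := by
    intro y hy
    have hyi : IsIntegral ℤ y := ⟨f, hfm, hy⟩
    have h1 : minpoly ℤ y ∣ f := minpoly.isIntegrallyClosed_dvd hyi hy
    have h2 := ((minpoly.prime_of_isIntegrallyClosed hyi).irreducible.associated_of_dvd
      hfp.irreducible h1)
    exact eq_of_monic_of_associated (minpoly.monic hyi) hfm h2
  have hdeg : 2 ≤ f.natDegree := by
    by_contra hlt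
    have hpos : 0 < f.natDegree := minpoly.natDegree_pos hxint
    have h1 : f.natDegree = 1 := by omega
    have h2 := hfm.eq_X_add_C h1
    have h3 : aeval x f = 0 := minpoly.aeval _ _
    rw [h2] at h3
    simp at h3
    apply hirr
    exact ⟨-(f.coeff 0 : ℚ), by push_cast; linarith⟩
  have hsQ : (f.map (Int.castRingHom ℚ)).Separable := by
    apply Irreducible.separable
    exact (hfm.irreducible_iff_irreducible_map_fraction_map (K := ℚ)).1 hfp.irreducible
  have hsR : (f.map (Int.castRingHom ℝ)).Separable := by
    have := hsQ.map (f := algebraMap ℚ ℝ)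
    rw [Polynomial.map_map] at this
    rwa [show (algebraMap ℚ ℝ).comp (Int.castRingHom ℚ) = Int.castRingHom ℝ from RingHom.ext_int _ _] at this
  refine ⟨f, g, m, hfm, hgm, ?_, hg, ?_, ?_, nodup_roots hsR, ?_, hdeg, ?_, ?_⟩
  · by_contra h
    have : m = 0 := by omega
    rw [this] at hg
    simp at hg
    exact hng (hg ▸ hfP)
  · exact hs.of_dvd (hP.map _).ne_zero (Polynomial.map_dvd _ hfP)
  · exact hs.of_dvd (hP.map _).ne_zero (Polynomial.map_dvd _ ⟨_, by rw [mul_comm]; exact hg⟩)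
  · rw [key f hfm]; exact minpoly.aeval _ _
  · intro y hy hyg
    rw [key f hfm] at hy
    rw [key g hgm] at hyg
    have := minpoly.isIntegrallyClosed_dvd ⟨f, hfm, hy⟩ hyg
    rw [hmin y hy] at this
    exact hng this
  · intro y hy
    rw [key f hfm] at hy
    rintro ⟨q, rfl⟩
    have h1 := hmin _ hy
    have hyi : IsIntegral ℤ ((q : ℝ)) := ⟨f, hfm, hy⟩
    have h2 : IsIntegral ℤ q := by
      have : IsIntegral ℤ (algebraMap ℚ ℝ q) := hyi
      exact (isIntegral_algebraMap_iff (algebraMap ℚ ℝ).injective).1 this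
    obtain ⟨z, hz⟩ := IsIntegrallyClosed.isIntegral_iff.1 h2
    have h3 : minpoly ℤ (q : ℝ) ∣ X - C z := by
      apply minpoly.isIntegrallyClosed_dvd hyi
      simp [← hz]
    rw [h1] at h3
    have := natDegree_le_of_dvd h3 (X_sub_C_ne_zero z)
    rw [natDegree_X_sub_C] at this
    omega

lemma sd_sumsq {n : ℕ} (S : Matrix (Fin n) (Fin n) ℝ) (hS : IsSeidel S) (hH : S.IsHermitian) :
    ∑ i, hH.eigenvalues i = 0 ∧ ∑ i, hH.eigenvalues i ^ 2 = (n : ℝ) * (n - 1) := by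
  constructor
  · have := hH.trace_eq_sum_eigenvalues
    simp [Matrix.trace, hS.2.1] at this
    simpa using this.symm
  · have h1 : (S ^ 2).trace = ∑ i, hH.eigenvalues i ^ 2 := by
      conv_lhs => rw [hH.spectral_theorem, ← map_pow, Unitary.conjStarAlgAut_apply,
        Matrix.trace_mul_comm, ← mul_assoc]
      simp [Matrix.diagonal_pow, Matrix.trace]
    rw [← h1, pow_two, Matrix.trace]
    have : ∀ i, (S * S).diag i = (n : ℝ) - 1 := by
      intro i
      rw [Matrix.diag_apply, Matrix.mul_apply]
      have : ∀ j, S i j * S j i = 1 - if i = j then 1 else 0 := by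
        intro j
        rw [hS.1.apply i j]
        by_cases h : i = j
        · subst h; simp [hS.2.1]
        · rcases hS.2.2 i j h with h' | h' <;> simp [h', h]
      simp [this]
    rw [Finset.sum_congr rfl fun i _ => this i]
    simp
    ring

lemma sd_not_sq (k : ℕ) : ¬ (X ^ 2 ∣ (X * (X + 1) ^ k : (ZMod 2)[X])) := by
  rw [pow_two, mul_dvd_mul_iff_left X_ne_zero, X_dvd_iff, coeff_zero_eq_eval_zero]
  simp

lemma sd_three (S : Matrix (Fin 3) (Fin 3) ℝ) (hS : IsSeidel S) (x : ℝ)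
    (hx : S.charpoly.eval x = 0) : ¬ Irrational x := by
  rw [Matrix.eval_charpoly, Matrix.det_fin_three] at hx
  obtain ⟨hs, h0, h1⟩ := hS
  have e1 := hs.apply 0 1
  have e2 := hs.apply 0 2
  have e3 := hs.apply 1 2
  have q : ∀ q : ℚ, x = q → ¬ Irrational x := fun q h hh => hh ⟨q, h.symm⟩
  simp [h0, e1, e2, e3] at hx
  have fin : ∀ e : ℚ, (x - 2 * e) * (x + e) ^ 2 = 0 → ¬ Irrational x := by
    intro e he
    rcases mul_eq_zero.1 he with h | h
    · exact q (2 * e) (by push_cast; linarith)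
    · exact q (-e) (by push_cast; linarith [pow_eq_zero_iff (two_ne_zero) |>.1 h])
  rcases h1 0 1 (by decide) with h | h <;> rcases h1 0 2 (by decide) with h' | h' <;>
    rcases h1 1 2 (by decide) with h'' | h'' <;> rw [h, h', h''] at hx
  all_goals first
    | exact fin 1 (by push_cast; linear_combination hx)
    | exact fin (-1) (by push_cast; linear_combination hx)

/-- Parity analysis. -/
lemma sd_parity (p q t : ℤ) (m a k : ℕ) (hm : 1 ≤ m) (ha : 1 ≤ a) (hk : 1 ≤ k)
    (h : ((X ^ 2 + C p * X + C q) ^ m * (X - C t) ^ a : ℤ[X]).map (Int.castRingHom (ZMod 2)) =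
      X * (X + 1) ^ k) :
    (a = 1 ∧ Even t ∧ Even p) ∨ (m = 1 ∧ Odd t) := by
  have hns := sd_not_sq k
  rw [← h] at hns
  simp only [Polynomial.map_mul, Polynomial.map_pow, Polynomial.map_add, Polynomial.map_sub,
    map_X, map_C] at h hns
  have E0 := congrArg (eval 0) h
  have E1 := congrArg (eval 1) h
  have c2 : (1 + 1 : ZMod 2) = 0 := by decide
  simp [c2, show k ≠ 0 by omega] at E0 E1
  have dt : Even t → X ∣ (X - C ((Int.castRingHom (ZMod 2)) t)) := by
    intro ht
    have : (Int.castRingHom (ZMod 2)) t = 0 := by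
      simpa using (ZMod.intCast_zmod_eq_zero_iff_dvd t 2).2 (by exact_mod_cast ht.two_dvd)
    rw [this]; simp
  have dq : Even q → X ∣ (X ^ 2 + C ((Int.castRingHom (ZMod 2)) p) * X +
      C ((Int.castRingHom (ZMod 2)) q)) := by
    intro ht
    have : (Int.castRingHom (ZMod 2)) q = 0 := by
      simpa using (ZMod.intCast_zmod_eq_zero_iff_dvd q 2).2 (by exact_mod_cast ht.two_dvd)
    rw [this, C_0, add_zero]
    exact dvd_add (dvd_pow_self _ two_ne_zero) (dvd_mul_left _ _)
  have ev : ∀ z : ℤ, (z : ZMod 2) = 0 → Even z := by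
    intro z hz
    exact even_iff_two_dvd.2 (by exact_mod_cast (ZMod.intCast_zmod_eq_zero_iff_dvd z 2).1 hz)
  have od : ∀ z : ℤ, ¬ Even z → (z : ZMod 2) = 1 := by
    intro z hz
    rw [Int.not_even_iff_odd] at hz
    obtain ⟨r, rfl⟩ := hz
    push_cast
    rw [show (2 : ZMod 2) = 0 by decide]; simp
  by_cases ht : Even t
  · left
    by_cases hq : Even q
    · exfalso; apply hns
      exact (pow_two (X : (ZMod 2)[X])).dvd.trans
        (mul_dvd_mul (dvd_pow (dq hq) (by omega)) (dvd_pow (dt ht) (by omega)))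
    · refine ⟨?_, ht, ?_⟩
      · by_contra hne
        apply hns
        exact Dvd.dvd.mul_left ((pow_dvd_pow_of_dvd (dt ht) 2).trans (pow_dvd_pow _ (by omega))) _
      · have ht0 : (t : ZMod 2) = 0 := by
          simpa using (ZMod.intCast_zmod_eq_zero_iff_dvd t 2).2 (by exact_mod_cast ht.two_dvd)
        rw [od q hq, ht0] at E1
        apply ev
        simp at E1
        have := E1.1
        linear_combination this - c2
  · right
    refine ⟨?_, Int.not_even_iff_odd.1 ht⟩
    have hq : Even q := by
      rw [od t ht] at E0
      simp at E0
      exact ev _ E0.1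
    by_contra hne
    apply hns
    exact Dvd.dvd.mul_right ((pow_dvd_pow_of_dvd (dq hq) 2).trans (pow_dvd_pow _ (by omega))) _

/-- The real algebra of the quadratic case. -/
lemma sd_algebra (x y : ℝ) (p q t : ℤ) (m a : ℕ) (hm : 1 ≤ m) (ha : 1 ≤ a) (hxy : x ≠ y)
    (hx : Irrational x) (hp : x + y = -p) (hq : x * y = q)
    (h1 : m * (x + y) + a * (t : ℝ) = 0)
    (h2 : m * (x ^ 2 + y ^ 2) + a * (t : ℝ) ^ 2 = (2 * m + a : ℝ) * (2 * m + a - 1))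
    (hpar : (a = 1 ∧ Even t ∧ Even p) ∨ (m = 1 ∧ Odd t)) :
    a = 1 ∧ t = 0 ∧ y = -x ∧ x ^ 2 = 2 * m + 1 := by
  have hd : 0 < (x - y) ^ 2 := by positivity [sub_ne_zero.2 hxy]
  have hmR : (1 : ℝ) ≤ m := by exact_mod_cast hm
  have haR : (1 : ℝ) ≤ a := by exact_mod_cast ha
  rcases hpar with ⟨rfl, ht, hpe⟩ | ⟨rfl, ht⟩
  · obtain ⟨r, rfl⟩ := hpe
    push_cast at *
    have ht' : (t : ℝ) = m * (r + r) := by rw [hp] at h1; linarith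
    rw [ht'] at h2
    have h3 : (x ^ 2 + y ^ 2) + m * (r + r : ℝ) ^ 2 = 2 * (2 * m + 1) := by
      have : (m : ℝ) ≠ 0 := by positivity
      apply mul_left_cancel₀ this
      linear_combination h2
    have h4 : (x - y) ^ 2 = (2 * m + 1) * (4 - 4 * (r : ℝ) ^ 2) := by
      linear_combination 2 * h3 - (x + y - (r + r)) * hp
    have h5 : (r : ℝ) ^ 2 < 1 := by
      rw [h4] at hd
      have := (mul_pos_iff_of_pos_left (by positivity)).1 hd
      linarith
    have h6 : r = 0 := by
      have : r ^ 2 < 1 := by exact_mod_cast h5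
      nlinarith [sq_nonneg r, this, sq_eq_zero_iff.1 (le_antisymm (by omega) (sq_nonneg r))]
    subst h6
    simp at *
    refine ⟨by exact_mod_cast ht', by linarith, ?_⟩
    have : y = -x := by linarith
    subst this
    linarith
  · exfalso
    simp at h1 h2
    have hs : x + y = -(a * t) := by linarith
    have h4 : (x - y) ^ 2 = (a + 2) * (2 * (a + 1) - a * (t : ℝ) ^ 2) := by
      linear_combination 2 * h2 - (x + y - a * t) * hs
    have h5 : (a : ℝ) * (t : ℝ) ^ 2 < 2 * (a + 1) := by
      rw [h4] at hd
      have := (mul_pos_iff_of_pos_left (by positivity)).1 hd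
      linarith
    have h6 : (a : ℤ) * t ^ 2 < 2 * (a + 1) := by exact_mod_cast h5
    have h7 : t ^ 2 = 1 := by
      obtain ⟨r, rfl⟩ := ht
      have ha' : (1 : ℤ) ≤ a := by exact_mod_cast ha
      have : (2 * r + 1) ^ 2 < 4 + 1 := by nlinarith
      have h8 : r < 1 := by nlinarith
      have h9 : -2 < r := by nlinarith
      have : r = 0 ∨ r = -1 := by omega
      rcases this with rfl | rfl <;> norm_num
    have h7' : (t : ℝ) ^ 2 = 1 := by exact_mod_cast h7
    rw [h7'] at h4
    have h8 : (x - y - (a + 2)) * (x - y + (a + 2)) = 0 := by linear_combination h4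
    rcases mul_eq_zero.1 h8 with h | h
    · exact hx ⟨(-(a * t) + (a + 2)) / 2, by push_cast; linarith⟩
    · exact hx ⟨(-(a * t) - (a + 2)) / 2, by push_cast; linarith⟩

theorem seidel_odd_irrational_spectrum {n : ℕ} (hn : Odd n)
    (S : Matrix (Fin n) (Fin n) ℝ) (hS : IsSeidel S) (hH : S.IsHermitian)
    (h3 : (Finset.univ.image hH.eigenvalues).card = 3)
    (hirr : ∃ i, Irrational (hH.eigenvalues i)) :
    (Finset.univ.filter fun i => hH.eigenvalues i = -Real.sqrt n).card = (n - 1) / 2 ∧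
    (Finset.univ.filter fun i => hH.eigenvalues i = 0).card = 1 ∧
    (Finset.univ.filter fun i => hH.eigenvalues i = Real.sqrt n).card = (n - 1) / 2 := by
  classical
  have hT : ∃ T : Matrix (Fin n) (Fin n) ℤ, T.map (Int.castRingHom ℝ) = S ∧ (∀ i, T i i = 0) ∧
      ∀ i j, i ≠ j → T i j = 1 ∨ T i j = -1 := by
    refine ⟨Matrix.of fun i j => if S i j = 0 then 0 else if S i j = 1 then 1 else -1, ?_, ?_, ?_⟩
    · ext i j
      by_cases h : i = j
      · subst h; simp [hS.2.1]
      · rcases hS.2.2 i j h with h | h <;> norm_num [h]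
    · intro i; simp [hS.2.1]
    · intro i j h
      rcases hS.2.2 i j h with h | h <;> norm_num [h]
  obtain ⟨T, hTS, hT0, hT1⟩ := hT
  have hz := sd_charpoly_zmod hn T hT0 hT1
  have hch : T.charpoly.map (Int.castRingHom ℝ) = S.charpoly := by
    rw [← Matrix.charpoly_map, hTS]
  obtain ⟨i0, hi0⟩ := hirr
  have hroots : S.charpoly.roots = Multiset.map hH.eigenvalues Finset.univ.val :=
    hH.roots_charpoly_eq_eigenvalues
  have hcount : ∀ z, (Finset.univ.filter fun i => hH.eigenvalues i = z).card =
      S.charpoly.roots.count z := by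
    intro z
    rw [hroots, Multiset.count_map]
    simp only [eq_comm (a := z)]
    rfl
  obtain ⟨hs1, hs2⟩ := sd_sumsq S hS hH
  have hsum1 : S.charpoly.roots.sum = 0 := by rw [hroots]; exact hs1
  have hsum2 : (S.charpoly.roots.map (fun z => z ^ 2)).sum = (n : ℝ) * (n - 1) := by
    rw [hroots, Multiset.map_map]; exact hs2
  have hcard : S.charpoly.roots.card = n := by rw [hroots]; simp
  have h3' : S.charpoly.roots.toFinset.card = 3 := by
    rw [hroots, ← h3]; rfl
  have hn3 : n ≠ 3 := by
    rintro rfl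
    refine sd_three S hS (hH.eigenvalues i0) ?_ hi0
    rw [hH.charpoly_eq, eval_prod]
    exact Finset.prod_eq_zero (Finset.mem_univ i0) (by simp)
  have hnge : 3 ≤ n := by
    have := Multiset.toFinset_card_le S.charpoly.roots
    omega
  obtain ⟨f, g, m, hfm, hgm, hm, hfg, hfs, hgs, hnd, -, hdeg, hdisj, hFirr⟩ :=
    sd_factor T.charpoly T.charpoly_monic (hch ▸ hH.splits_charpoly) (hH.eigenvalues i0)
      (by rw [hch, hroots]; exact Multiset.mem_map_of_mem _ (Finset.mem_univ i0)) hi0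
  have hR : S.charpoly.roots = m • (f.map (Int.castRingHom ℝ)).roots +
      (g.map (Int.castRingHom ℝ)).roots := by
    rw [← hch, hfg, Polynomial.map_mul, Polynomial.map_pow, roots_mul, roots_pow]
    exact mul_ne_zero (pow_ne_zero _ (hfm.map _).ne_zero) (hgm.map _).ne_zero
  have hfp := hfs.eq_prod_roots_of_monic (hfm.map _)
  have hgp := hgs.eq_prod_roots_of_monic (hgm.map _)
  have hfd := hfs.natDegree_eq_card_roots
  have hgd := hgs.natDegree_eq_card_roots
  rw [hfm.natDegree_map] at hfd
  rw [hgm.natDegree_map] at hgd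
  set F := (f.map (Int.castRingHom ℝ)).roots with hF
  set G := (g.map (Int.castRingHom ℝ)).roots with hG
  rw [hR] at hcount hsum1 hsum2 hcard h3'
  have hFG : Disjoint F.toFinset G.toFinset := by
    rw [Finset.disjoint_left]
    intro y hy hy'
    exact hdisj y (by simpa using hy) (by simpa using hy')
  have hun : F.toFinset.card + G.toFinset.card = 3 := by
    rw [← h3', Multiset.toFinset_add, Multiset.toFinset_nsmul _ _ (by omega),
      Finset.card_union_of_disjoint hFG]
  have hFc : F.toFinset.card = F.card := Multiset.toFinset_card_of_nodup hnd
  have hcard' : m * F.card + G.card = n := by simpa using hcard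
  by_cases hG0 : G = 0
  · -- the three eigenvalues are conjugate
    exfalso
    have hF3 : F.card = 3 := by rw [hG0] at hun; simp at hun; omega
    have hg1 : g = 1 := by
      rw [← hgm.natDegree_eq_zero]; rw [hgd, hG0]; rfl
    have hm2 : 2 ≤ m := by
      rw [hG0, hF3] at hcard'; simp at hcard'; omega
    have hns := sd_not_sq (n - 1)
    rw [← hz, hfg, hg1, mul_one, Polynomial.map_pow] at hns
    apply hns
    have hX : X ∣ (f.map (Int.castRingHom (ZMod 2))) ^ m := by
      rw [← Polynomial.map_pow, ← mul_one (f ^ m), ← hg1, ← hfg, hz]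
      exact dvd_mul_right _ _
    exact (pow_dvd_pow_of_dvd (prime_X.dvd_of_dvd_pow hX) 2).trans (pow_dvd_pow _ hm2)
  · have hG1 : 1 ≤ G.toFinset.card := by
      rw [Nat.one_le_iff_ne_zero, Finset.card_ne_zero]
      simpa using hG0
    have hF2 : F.card = 2 := by omega
    have hG1' : G.toFinset.card = 1 := by omega
    obtain ⟨θ, hθ⟩ := Finset.card_eq_one.1 hG1'
    obtain ⟨x, y, hxy⟩ := Multiset.card_eq_two.1 hF2
    have hGr : G = Multiset.replicate G.card θ := by
      rw [Multiset.eq_replicate]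
      refine ⟨rfl, fun b hb => ?_⟩
      have : b ∈ G.toFinset := by simpa using hb
      simpa [hθ] using this
    set a := G.card with ha
    have ha1 : 1 ≤ a := by
      rw [ha]; exact Multiset.card_pos.2 hG0
    have hne : x ≠ y := by
      rintro rfl
      rw [hxy] at hnd
      simp at hnd
    have hxi : Irrational x := hFirr x (by rw [hxy]; simp)
    rw [hxy, hGr] at hsum1 hsum2
    simp [Multiset.map_nsmul, Multiset.sum_nsmul] at hsum1 hsum2
    have hfd2 : f.natDegree = 2 := by rw [hfd, hF2]
    -- coefficients of f
    obtain ⟨p, q, hpq⟩ : ∃ p q : ℤ, f = X ^ 2 + C p * X + C q := by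
      refine ⟨f.coeff 1, f.coeff 0, ?_⟩
      have h := f.as_sum_range_C_mul_X_pow
      have h2 : f.coeff 2 = 1 := by have := hfm.coeff_natDegree; rwa [hfd2] at this
      rw [hfd2] at h
      simp only [Finset.sum_range_succ, Finset.sum_range_zero, h2, C_1, pow_zero, pow_one] at h
      conv_lhs => rw [h]
      ring
    have hE : ∀ z : ℝ, z ^ 2 + p * z + q = (z - x) * (z - y) := by
      intro z
      have := congrArg (eval z) hfp
      rw [hxy, hpq] at this
      simpa using this
    have hq : x * y = q := by have := hE 0; simp at this; linarith
    have hp : x + y = -p := by have := hE 1; linarith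
    -- θ is an integer
    have hat : (a : ℝ) * θ = m * p := by linear_combination hsum1 - m * hp
    have hθQ : θ = ((m * p / a : ℚ) : ℝ) := by
      have : (a : ℝ) ≠ 0 := by positivity
      push_cast; field_simp; linarith
    have hθi : IsIntegral ℤ θ := by
      refine ⟨g, hgm, ?_⟩
      have : θ ∈ G := by
        have : θ ∈ G.toFinset := by rw [hθ]; simp
        simpa using this
      rw [hG, mem_roots (hgm.map _).ne_zero, IsRoot.def, eval_map] at this
      exact this
    obtain ⟨t, ht⟩ : ∃ t : ℤ, θ = t := by
      have h2 : IsIntegral ℤ (m * p / a : ℚ) := by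
        rw [hθQ] at hθi
        have : IsIntegral ℤ (algebraMap ℚ ℝ (m * p / a : ℚ)) := hθi
        exact (isIntegral_algebraMap_iff (algebraMap ℚ ℝ).injective).1 this
      obtain ⟨z, hz⟩ := IsIntegrallyClosed.isIntegral_iff.1 h2
      exact ⟨z, by rw [hθQ, ← hz]; simp⟩
    have hgt : g = (X - C t) ^ a := by
      apply map_injective (Int.castRingHom ℝ) Int.cast_injective
      rw [hgp, hGr, ht]
      simp
    rw [hfg, hpq, hgt] at hz
    have hpar := sd_parity p q t m a (n - 1) hm ha1 (by omega) hz
    rw [hF2] at hcard'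
    have hnR : (n : ℝ) = 2 * m + a := by rw [← hcard']; push_cast; ring
    rw [ht] at hsum1 hsum2
    obtain ⟨e1, e2, e3, e4⟩ := sd_algebra x y p q t m a hm ha1 hne hxi hp hq
      (by linarith) (by rw [← hnR]; linarith) hpar
    have e5 : x ^ 2 = (n : ℝ) := by rw [e4, hnR, e1]; simp
    have hmn : (n - 1) / 2 = m := by omega
    have hx0 : x ≠ 0 := hxi.ne_zero
    have hnx : x ≠ -x := by intro h; apply hx0; linarith
    rw [hmn, hcount, hcount, hcount, hxy, hGr, ht, e1, e2, e3, ← e5, Real.sqrt_sq_eq_abs]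
    rcases abs_choice x with h | h <;> rw [h] <;>
      simp [Multiset.count_singleton, hx0, hnx, hnx.symm, Multiset.count_cons,
        Multiset.count_nsmul, hx0.symm, eq_comm (a := (0:ℝ))]
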